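/- Let M ≥ 3 be an integer, let (u_0, u_1, …, u_M) solve the optimality system, and fix c ∈ (γ_min, 1/2]. If γ_M < c, then u_1 + φ_M(u_{M−1}) > [ c^{−1}·γ_max^{−(M−3)}·(1 − h_M(c)) − h_M(γ_max)·S_{M−2}(γ_max) ] / [ S_{M−2}(γ_max) + γ_max + c^{−1}·γ_max^{−(M−3)} ] − c·h'_M(c) + h_M(c). -/

import Mathlib

noncomputable def gammaMin (d : ℕ) (β : ℝ) : ℝ := β / (2 * β + d)

noncomputable def gammaMax (d : ℕ) (β : ℝ) : ℝ := (β + d) / (2 * β + d)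

noncomputable def Sset (d : ℕ) (β : ℝ) : Set ℝ := Set.Icc (gammaMin d β) (gammaMax d β)

noncomputable def hFun (M : ℕ) (γ : ℝ) : ℝ := (1 - γ) / (1 - γ ^ M)

/-- φ_M(x) = min_{γ∈𝒮} (γ·x + h_M(γ)). -/
noncomputable def phiFun (d : ℕ) (β : ℝ) (M : ℕ) (x : ℝ) : ℝ :=
  sInf ((fun γ => γ * x + hFun M γ) '' Sset d β)

/-- (u_0, …, u_M) solves the optimality system: u_0 = 0, u_M = 1,
0 < u_1 < ⋯ < u_{M−1} < 1, and u_i = u_1 + φ_M(u_{i−1}) for 2 ≤ i ≤ M. -/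
def SolvesOptSystem (d : ℕ) (β : ℝ) (M : ℕ) (u : ℕ → ℝ) : Prop :=
  u 0 = 0 ∧ u M = 1 ∧ 0 < u 1 ∧ u (M - 1) < 1 ∧
  (∀ i, 1 ≤ i → i + 1 ≤ M - 1 → u i < u (i + 1)) ∧
  ∀ i, 2 ≤ i → i ≤ M → u i = u 1 + phiFun d β M (u (i - 1))

/-- S_n(a) = Σ_{k=0}^{n−1} a^{−k}. -/
noncomputable def Sgeo (n : ℕ) (a : ℝ) : ℝ := ∑ k ∈ Finset.range n, a⁻¹ ^ k

/-!
Every element `γ` of the index set gives an affine majorant `x ↦ γ * x + h γ` of the envelope `φ`.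
Using the majorant of slope `a` along the first `M - 2` steps of the recursion and the one of slope
`c` for the last step turns the system into affine inequalities, which bound `u 1` from below by the
fraction. For the second summand, `γ_M < c` and strict convexity of `h` force `-h' c < u (M - 1)`;
then `φ (u (M - 1)) = γ_M * u (M - 1) + h γ_M` lies strictly above the value `h c - c * h' c` at `0`
of the tangent to `h` at `c`.

Strict convexity of `h = (1 - x) / (1 - x ^ M)` amounts to the strict trapezoidal bound
`(1 + x) * ∑ k < M, x ^ k < M * (1 + x ^ M)`, obtained by pairing `x ^ k` with `x ^ (M - k)`.
-/

open Set Bornology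

section Sgeo

variable {a b : ℝ}

lemma Sgeo_succ (n : ℕ) (a : ℝ) : Sgeo (n + 1) a = Sgeo n a + a⁻¹ ^ n :=
  Finset.sum_range_succ _ n

lemma Sgeo_nonneg (n : ℕ) (ha : 0 ≤ a) : 0 ≤ Sgeo n a :=
  Finset.sum_nonneg fun _ _ => by positivity

lemma inv_pow_mul_le_of_le_add_mul {v : ℕ → ℝ} (ha : 0 < a) {n : ℕ}
    (hv : ∀ i < n, v (i + 1) ≤ b + a * v i) :
    a⁻¹ ^ n * v n ≤ v 0 + a⁻¹ * b * Sgeo n a := by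
  induction n with
  | zero => simp [Sgeo]
  | succ n ih =>
    calc a⁻¹ ^ (n + 1) * v (n + 1)
        ≤ a⁻¹ ^ (n + 1) * (b + a * v n) := by gcongr; exact hv n n.lt_succ_self
      _ = a⁻¹ ^ n * v n + a⁻¹ * b * a⁻¹ ^ n := by rw [pow_succ]; field_simp; ring
      _ ≤ v 0 + a⁻¹ * b * Sgeo n a + a⁻¹ * b * a⁻¹ ^ n := by
        gcongr; exact ih fun i hi => hv i (hi.trans n.lt_succ_self)
      _ = v 0 + a⁻¹ * b * Sgeo (n + 1) a := by rw [Sgeo_succ]; ring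

lemma div_le_of_affine_recursion {A c C : ℝ} {v : ℕ → ℝ} (ha : 0 < a) (hc : 0 < c) {n : ℕ}
    (hv : ∀ i < n + 1, v (i + 1) ≤ v 0 + (a * v i + A))
    (hlast : v (n + 2) ≤ v 0 + (c * v (n + 1) + C)) :
    (c⁻¹ * a⁻¹ ^ n * (v (n + 2) - C) - A * Sgeo (n + 1) a) /
      (Sgeo (n + 1) a + a + c⁻¹ * a⁻¹ ^ n) ≤ v 0 := by
  have hS : 0 ≤ Sgeo (n + 1) a := Sgeo_nonneg _ ha.le
  have hupper : a⁻¹ ^ n * v (n + 1) ≤ a * v 0 + (v 0 + A) * Sgeo (n + 1) a :=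
    calc a⁻¹ ^ n * v (n + 1)
        = a * (a⁻¹ ^ (n + 1) * v (n + 1)) := by rw [pow_succ]; field_simp
      _ ≤ a * (v 0 + a⁻¹ * (v 0 + A) * Sgeo (n + 1) a) := by
        gcongr
        exact inv_pow_mul_le_of_le_add_mul ha fun i hi => (hv i hi).trans_eq (by ring)
      _ = a * v 0 + (v 0 + A) * Sgeo (n + 1) a := by field_simp
  have hlower : c⁻¹ * a⁻¹ ^ n * (v (n + 2) - C - v 0) ≤ a⁻¹ ^ n * v (n + 1) :=
    calc c⁻¹ * a⁻¹ ^ n * (v (n + 2) - C - v 0)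
        ≤ c⁻¹ * a⁻¹ ^ n * (c * v (n + 1)) := by gcongr; linarith
      _ = a⁻¹ ^ n * v (n + 1) := by field_simp
  rw [div_le_iff₀ (by positivity)]
  linarith

end Sgeo

section Envelope

/-- The lower envelope of the affine functions `x ↦ γ * x + h γ`, `γ ∈ K`; the function `φ_M` is the
case `h = h_M`, `K = 𝒮`. It is `0` where the infimum is not a real number. -/
noncomputable def affineEnvelope (h : ℝ → ℝ) (K : Set ℝ) (x : ℝ) : ℝ :=
  sInf ((fun γ => γ * x + h γ) '' K)

variable {h : ℝ → ℝ} {K s : Set ℝ} {c g x : ℝ}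

lemma affineEnvelope_le (hK : IsBounded K) (hh : BddBelow (h '' K)) (hg : g ∈ K) :
    affineEnvelope h K x ≤ g * x + h g := by
  obtain ⟨R, hR⟩ := hK.exists_norm_le
  obtain ⟨m, hm⟩ := hh
  refine csInf_le ⟨-(R * |x|) + m, ?_⟩ (mem_image_of_mem _ hg)
  rintro _ ⟨γ, hγ, rfl⟩
  have hmul : |γ * x| ≤ R * |x| := by
    rw [abs_mul]
    exact mul_le_mul_of_nonneg_right (hR γ hγ) (abs_nonneg x)
  exact add_le_add (abs_le.1 hmul).1 (hm (mem_image_of_mem h hγ))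

lemma affineEnvelope_eq_of_isMinOn (hg : g ∈ K) (hmin : IsMinOn (fun γ => γ * x + h γ) K g) :
    affineEnvelope h K x = g * x + h g :=
  IsLeast.csInf_eq ⟨mem_image_of_mem _ hg, forall_mem_image.2 hmin⟩

lemma sub_mul_deriv_lt_of_strictConvexOn (hh : StrictConvexOn ℝ s h) (hg : g ∈ s) (hc : c ∈ s)
    (hg0 : 0 ≤ g) (hgc : g < c) (hd : DifferentiableAt ℝ h c)
    (hle : g * x + h g ≤ c * x + h c) : h c - c * deriv h c < g * x + h g := by
  have hcg : 0 < c - g := sub_pos.2 hgc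
  have htangent : h c - h g < deriv h c * (c - g) := by
    rw [← div_lt_iff₀ hcg, ← slope_def_field]
    exact hh.slope_lt_deriv hg hc hgc hd
  have hx : 0 < x + deriv h c := (mul_pos_iff_of_pos_left hcg).1 (by linarith)
  have hgx : 0 ≤ g * (x + deriv h c) := mul_nonneg hg0 hx.le
  linarith

end Envelope

section hFun

open Finset (range)

variable {M : ℕ}

lemma one_add_mul_geom_sum_lt {R : Type*} [CommRing R] [LinearOrder R] [IsStrictOrderedRing R]
    {x : R} (hx0 : 0 ≤ x) (hx1 : x < 1) (hM : 2 ≤ M) :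
    (1 + x) * ∑ k ∈ range M, x ^ k < M * (1 + x ^ M) := by
  have hgap {k : ℕ} (hk : k ≤ M) :
      1 + x ^ M - (x ^ k + x ^ (M - k)) = (1 - x ^ k) * (1 - x ^ (M - k)) := by
    rw [← pow_mul_pow_sub x hk]; ring
  have hsum : (1 + x) * ∑ k ∈ range M, x ^ k = ∑ k ∈ range M, (x ^ k + x ^ (M - k)) := by
    rw [one_add_mul, Finset.sum_add_distrib, Finset.mul_sum,
      ← Finset.sum_range_reflect (fun k => x * x ^ k)]
    congr 1
    refine Finset.sum_congr rfl fun k hk => ?_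
    rw [← pow_succ', show M - 1 - k + 1 = M - k by have := Finset.mem_range.1 hk; lia]
  calc (1 + x) * ∑ k ∈ range M, x ^ k
      = ∑ k ∈ range M, (x ^ k + x ^ (M - k)) := hsum
    _ < ∑ _k ∈ range M, (1 + x ^ M) := by
      refine Finset.sum_lt_sum (fun k hk => ?_) ⟨1, Finset.mem_range.2 hM, ?_⟩
      · rw [← sub_nonneg, hgap (Finset.mem_range.1 hk).le]
        exact mul_nonneg (sub_nonneg.2 (pow_le_one₀ hx0 hx1.le))
          (sub_nonneg.2 (pow_le_one₀ hx0 hx1.le))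
      · rw [← sub_pos, hgap (by lia)]
        exact mul_pos (sub_pos.2 (pow_lt_one₀ hx0 hx1 one_ne_zero))
          (sub_pos.2 (pow_lt_one₀ hx0 hx1 (by lia)))
    _ = M * (1 + x ^ M) := by rw [Finset.sum_const, Finset.card_range, nsmul_eq_mul]

variable {x : ℝ}

lemma hFun_nonneg (M : ℕ) (hx0 : 0 ≤ x) (hx1 : x ≤ 1) : 0 ≤ hFun M x :=
  div_nonneg (sub_nonneg.2 hx1) (sub_nonneg.2 (pow_le_one₀ hx0 hx1))

lemma hasDerivAt_one_sub_pow (n : ℕ) (x : ℝ) :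
    HasDerivAt (fun y : ℝ => 1 - y ^ n) (-(n * x ^ (n - 1))) x :=
  (hasDerivAt_pow n x).const_sub 1

lemma hasDerivAt_hFun (hx : x ^ M ≠ 1) :
    HasDerivAt (hFun M) (((1 - x) * (M * x ^ (M - 1)) - (1 - x ^ M)) / (1 - x ^ M) ^ 2) x :=
  (((hasDerivAt_id' x).const_sub 1).fun_div (hasDerivAt_one_sub_pow M x)
    (sub_ne_zero.2 hx.symm)).congr_deriv (by ring)

lemma hasDerivAt_deriv_hFun (hM : 2 ≤ M) (hx : x ^ M ≠ 1) :
    HasDerivAt (deriv (hFun M))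
      (M * x ^ (M - 2) * (M * (1 - x) * (1 + x ^ M) - (1 + x) * (1 - x ^ M)) / (1 - x ^ M) ^ 3)
      x := by
  have hderiv : deriv (hFun M) =ᶠ[nhds x]
      fun y => ((1 - y) * (M * y ^ (M - 1)) - (1 - y ^ M)) / (1 - y ^ M) ^ 2 := by
    filter_upwards [(continuous_pow M).continuousAt.eventually_ne hx] with y hy
    exact (hasDerivAt_hFun hy).deriv
  have hq : 1 - x ^ M ≠ 0 := sub_ne_zero.2 hx.symm
  have hdiv := ((((hasDerivAt_id' x).const_sub 1).fun_mul
    ((hasDerivAt_pow (M - 1) x).const_mul (M : ℝ))).fun_sub (hasDerivAt_one_sub_pow M x)).fun_div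
    ((hasDerivAt_one_sub_pow M x).fun_pow 2) (pow_ne_zero 2 hq)
  refine (hdiv.congr_of_eventuallyEq hderiv).congr_deriv ?_
  obtain ⟨n, rfl⟩ := Nat.exists_eq_add_of_le' hM
  simp only [Nat.add_sub_cancel, show n + 2 - 1 = n + 1 by lia]
  field_simp
  push_cast
  ring

lemma strictConvexOn_hFun (hM : 2 ≤ M) : StrictConvexOn ℝ (Ioo 0 1) (hFun M) := by
  have hpow {x : ℝ} (hx : x ∈ Ioo 0 1) : x ^ M < 1 := pow_lt_one₀ hx.1.le hx.2 (by lia)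
  refine strictConvexOn_of_deriv2_pos' (convex_Ioo 0 1)
    (fun x hx => (hasDerivAt_hFun (hpow hx).ne).continuousAt.continuousWithinAt) fun x hx => ?_
  have hx0 : 0 < x := hx.1
  have hM0 : (0 : ℝ) < M := Nat.cast_pos.2 (by lia)
  have hq : 0 < 1 - x ^ M := sub_pos.2 (hpow hx)
  have htrapezoid : (1 + x) * (1 - x ^ M) < M * (1 - x) * (1 + x ^ M) :=
    calc (1 + x) * (1 - x ^ M)
        = (1 + x) * (∑ k ∈ range M, x ^ k) * (1 - x) := by rw [← geom_sum_mul_neg]; ring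
      _ < M * (1 + x ^ M) * (1 - x) :=
        mul_lt_mul_of_pos_right (one_add_mul_geom_sum_lt hx0.le hx.2 hM) (sub_pos.2 hx.2)
      _ = M * (1 - x) * (1 + x ^ M) := by ring
  rw [Function.iterate_succ_apply, Function.iterate_one,
    (hasDerivAt_deriv_hFun hM (hpow hx).ne).deriv]
  exact div_pos (mul_pos (mul_pos hM0 (pow_pos hx0 _)) (sub_pos.2 htrapezoid)) (pow_pos hq 3)

end hFun

section Sset

variable (d : ℕ) {β : ℝ}

lemma Sset_subset_Ioo (hβ : 0 < β) : Sset d β ⊆ Ioo 0 1 := by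
  refine Icc_subset_Ioo ?_ ?_
  · unfold gammaMin; positivity
  · rw [gammaMax, div_lt_one (by positivity)]
    linarith

lemma gammaMin_le_half (hβ : 0 < β) : gammaMin d β ≤ 1 / 2 := by
  rw [gammaMin, div_le_div_iff₀ (by positivity) two_pos]
  linarith [Nat.cast_nonneg (α := ℝ) d]

lemma half_le_gammaMax (hβ : 0 < β) : 1 / 2 ≤ gammaMax d β := by
  rw [gammaMax, div_le_div_iff₀ two_pos (by positivity)]
  linarith [Nat.cast_nonneg (α := ℝ) d]

lemma gammaMax_mem_Sset (hβ : 0 < β) : gammaMax d β ∈ Sset d β :=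
  right_mem_Icc.2 ((gammaMin_le_half d hβ).trans (half_le_gammaMax d hβ))

end Sset

theorem stmt11_general {K : Set ℝ} (hK : K ⊆ Ioo 0 1) {M : ℕ} (hM : 3 ≤ M) {u : ℕ → ℝ}
    (hu : ∀ i, 2 ≤ i → i ≤ M → u i ≤ u 1 + affineEnvelope (hFun M) K (u (i - 1)))
    {a c g : ℝ} (ha : a ∈ K) (hc : c ∈ K) (hg : g ∈ K)
    (hmin : IsMinOn (fun γ => γ * u (M - 1) + hFun M γ) K g) (hgc : g < c) :
    (c⁻¹ * a⁻¹ ^ (M - 3) * (u M - hFun M c) - hFun M a * Sgeo (M - 2) a) /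
      (Sgeo (M - 2) a + a + c⁻¹ * a⁻¹ ^ (M - 3)) - c * deriv (hFun M) c + hFun M c
    < u 1 + affineEnvelope (hFun M) K (u (M - 1)) := by
  obtain ⟨n, rfl⟩ := Nat.exists_eq_add_of_le' hM
  have hbdd : BddBelow (hFun (n + 3) '' K) :=
    ⟨0, forall_mem_image.2 fun γ hγ => hFun_nonneg _ (hK hγ).1.le (hK hγ).2.le⟩
  have hstep {γ : ℝ} (hγ : γ ∈ K) (i : ℕ) (hi : i < n + 2) :
      u (i + 2) ≤ u 1 + (γ * u (i + 1) + hFun (n + 3) γ) :=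
    (hu (i + 2) (by lia) (by lia)).trans <| by
      gcongr
      exact affineEnvelope_le ((Metric.isBounded_Ioo 0 1).subset hK) hbdd hγ
  have hfirst := div_le_of_affine_recursion (v := fun i => u (i + 1)) (hK ha).1 (hK hc).1
    (fun i hi => hstep ha i (by lia)) (hstep hc (n + 1) (by lia))
  have hsecond : hFun (n + 3) c - c * deriv (hFun (n + 3)) c
      < affineEnvelope (hFun (n + 3)) K (u (n + 3 - 1)) := by
    have hpow : c ^ (n + 3) ≠ 1 := (pow_lt_one₀ (hK hc).1.le (hK hc).2 (by lia)).ne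
    rw [affineEnvelope_eq_of_isMinOn hg hmin]
    exact sub_mul_deriv_lt_of_strictConvexOn (strictConvexOn_hFun (by lia)) (hK hg) (hK hc)
      (hK hg).1.le hgc (hasDerivAt_hFun hpow).differentiableAt (hmin hc)
  rw [sub_add_eq_add_sub, add_sub_assoc]
  exact add_lt_add_of_le_of_lt hfirst hsecond

theorem stmt11 (d : ℕ) (hd : 1 ≤ d) (β : ℝ) (hβ : 0 < β) (M : ℕ) (hM3 : 3 ≤ M)
    (u : ℕ → ℝ) (hsol : SolvesOptSystem d β M u)
    (c : ℝ) (hc1 : gammaMin d β < c) (hc2 : c ≤ 1 / 2)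
    (gM : ℝ) (hgM : gM ∈ Sset d β)
    (hgMmin : ∀ γ ∈ Sset d β,
      gM * u (M - 1) + hFun M gM ≤ γ * u (M - 1) + hFun M γ)
    (hlt : gM < c) :
    (c⁻¹ * (gammaMax d β)⁻¹ ^ (M - 3) * (1 - hFun M c)
        - hFun M (gammaMax d β) * Sgeo (M - 2) (gammaMax d β)) /
      (Sgeo (M - 2) (gammaMax d β) + gammaMax d β + c⁻¹ * (gammaMax d β)⁻¹ ^ (M - 3))
      - c * deriv (hFun M) c + hFun M c
    < u 1 + phiFun d β M (u (M - 1)) := by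
  obtain ⟨-, huM, -, -, -, hrec⟩ := hsol
  have hlower := stmt11_general (Sset_subset_Ioo d hβ) hM3 (fun i h2 hi => (hrec i h2 hi).le)
    (gammaMax_mem_Sset d hβ) ⟨hc1.le, hc2.trans (half_le_gammaMax d hβ)⟩ hgM hgMmin hlt
  rwa [huM] at hlower
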